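/- The pair (G, A) is almost convex if and only if the pair (G, A) is geodesically stackable. -/

import Mathlib

namespace Stk

variable {G : Type*} [Group G] {A : Type*}

/-- Evaluation of a word over the generating alphabet in the group. -/
def eval (ρ : A → G) (w : List A) : G := (w.map ρ).prod

/-- `C` is a set of normal forms: evaluation restricted to `C` is a bijection onto `G`. -/
def IsNormalFormSet (ρ : A → G) (C : Set (List A)) : Prop :=
  ∀ g : G, ∃! w : List A, w ∈ C ∧ eval ρ w = g

/-- The directed edge `(g, a)` of the Cayley graph is degenerate with respect to `C`. -/
def IsDegenerate (ρ : A → G) (ι : A → A) (C : Set (List A)) (e : G × A) : Prop :=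
  ∃ y₁ y₂ : List A, y₁ ∈ C ∧ eval ρ y₁ = e.1 ∧ y₂ ∈ C ∧ eval ρ y₂ = e.1 * ρ e.2 ∧
    (y₁ ++ [e.2] = y₂ ∨ y₁ = y₂ ++ [ι e.2])

/-- A non-degenerate edge is recursive. -/
def IsRecursive (ρ : A → G) (ι : A → A) (C : Set (List A)) (e : G × A) : Prop :=
  ¬ IsDegenerate ρ ι C e

/-- `e` is one of the edges along the path starting at `g` labeled by the word `w`. -/
def EdgeOnPath (ρ : A → G) (g : G) (w : List A) (e : G × A) : Prop :=
  ∃ i : Fin w.length, e = (g * eval ρ (w.take i), w.get i)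

/-- A stackable structure for `(G, A)`: a normal form set `C` containing the empty word,
a well-founded strict partial order `lt` on the recursive edges, and a constant `k`,
such that each edge `(g, a)` admits a word of length at most `k` evaluating to `ρ a`,
each of whose edges along the path from `g` is degenerate or recursive and `lt`-below
`(g, a)`. -/
def IsStackableStructure (ρ : A → G) (ι : A → A) (C : Set (List A))
    (lt : G × A → G × A → Prop) (k : ℕ) : Prop :=
  ([] : List A) ∈ C ∧ IsNormalFormSet ρ C ∧
  (∀ e e' : G × A, lt e e' → IsRecursive ρ ι C e ∧ IsRecursive ρ ι C e') ∧
  Transitive lt ∧ WellFounded lt ∧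
  ∀ g : G, ∀ a : A, ∃ w : List A, w.length ≤ k ∧ eval ρ w = ρ a ∧
    ∀ e' : G × A, EdgeOnPath ρ g w e' → IsDegenerate ρ ι C e' ∨ lt e' (g, a)

/-- The pair `(G, A)` is stackable. -/
def IsStackable (ρ : A → G) (ι : A → A) : Prop :=
  ∃ (C : Set (List A)) (lt : G × A → G × A → Prop) (k : ℕ),
    IsStackableStructure ρ ι C lt k

/-- A stacking map for a stackable structure. -/
def IsStackingMap (ρ : A → G) (ι : A → A) (C : Set (List A))
    (lt : G × A → G × A → Prop) (k : ℕ) (Φ : G × A → List A) : Prop :=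
  ∀ e : G × A, IsRecursive ρ ι C e →
    eval ρ (Φ e) = ρ e.2 ∧ (Φ e).length ≤ k ∧
    ∀ e' : G × A, EdgeOnPath ρ e.1 (Φ e) e' → IsDegenerate ρ ι C e' ∨ lt e' e

/-- A stacking map extended by `Φ (g, a) = [a]` on degenerate edges. -/
def IsExtendedStackingMap (ρ : A → G) (ι : A → A) (C : Set (List A))
    (lt : G × A → G × A → Prop) (k : ℕ) (Φ : G × A → List A) : Prop :=
  (∀ e : G × A, IsDegenerate ρ ι C e → Φ e = [e.2]) ∧ IsStackingMap ρ ι C lt k Φ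

/-- A word is freely reduced if no letter is followed by its formal inverse. -/
def FreelyReduced (ι : A → A) (w : List A) : Prop :=
  List.Chain' (fun a b => b ≠ ι a) w


/-- Word length of a group element with respect to the generating set. -/
noncomputable def wlen (ρ : A → G) (g : G) : ℕ :=
  sInf {n : ℕ | ∃ w : List A, w.length = n ∧ eval ρ w = g}

/-- The path starting at `g` labeled by `w` lies in the ball of radius `n`: all vertices
are within distance `n` of the identity, and no edge has both endpoints at distance
exactly `n`. -/
def PathInBall (ρ : A → G) (g : G) (w : List A) (n : ℕ) : Prop :=
  (∀ p : List A, p <+: w → wlen ρ (g * eval ρ p) ≤ n) ∧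
  ∀ (p : List A) (a : A), p ++ [a] <+: w →
    ¬ (wlen ρ (g * eval ρ p) = n ∧ wlen ρ (g * eval ρ (p ++ [a])) = n)

/-- `(G, A)` is almost convex. -/
def IsAlmostConvex (ρ : A → G) : Prop :=
  ∃ k : ℕ, ∀ (n : ℕ) (g h : G), wlen ρ g = n → wlen ρ h = n →
    wlen ρ (g⁻¹ * h) ≤ 2 →
    ∃ w : List A, w.length ≤ k ∧ eval ρ w = g⁻¹ * h ∧ PathInBall ρ g w n

/-- The average distance to the identity of the endpoints of an edge. -/
noncomputable def edgeDist (ρ : A → G) (e : G × A) : ℚ :=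
  ((wlen ρ e.1 : ℚ) + (wlen ρ (e.1 * ρ e.2) : ℚ)) / 2

/-- The basic relation whose transitive closure is `<_Φ`: `e'` precedes `e` if both are
recursive and `e'` lies along the path of `Φ e`. -/
def FlowPrec (ρ : A → G) (ι : A → A) (C : Set (List A)) (Φ : G × A → List A)
    (e' e : G × A) : Prop :=
  IsRecursive ρ ι C e ∧ IsRecursive ρ ι C e' ∧ EdgeOnPath ρ e.1 (Φ e) e'

/-- `(G, A)` is geodesically stackable: stackable with geodesic normal forms and a
stacking map compatible with distance to the identity. -/
def IsGeodesicallyStackable (ρ : A → G) (ι : A → A) : Prop :=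
  ∃ (C : Set (List A)) (lt : G × A → G × A → Prop) (k : ℕ) (Φ : G × A → List A),
    IsStackableStructure ρ ι C lt k ∧ IsStackingMap ρ ι C lt k Φ ∧
    (∀ w ∈ C, w.length = wlen ρ (eval ρ w)) ∧
    ∀ e' e : G × A, Relation.TransGen (FlowPrec ρ ι C Φ) e' e →
      edgeDist ρ e' < edgeDist ρ e

/-- All edges along the path from `g` labeled by `w` satisfy `P`. -/
def AllE (ρ : A → G) (P : G × A → Prop) : G → List A → Prop
  | _, [] => True
  | g, a :: w => P (g, a) ∧ AllE ρ P (g * ρ a) w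

/-- Sum of the lengths of endpoints. -/
noncomputable def bet (ρ : A → G) (e : G × A) : ℕ := wlen ρ e.1 + wlen ρ (e.1 * ρ e.2)

theorem eval_nil (ρ : A → G) : eval ρ [] = 1 := rfl

theorem eval_cons (ρ : A → G) (a : A) (w : List A) : eval ρ (a :: w) = ρ a * eval ρ w := by
  simp [eval]

theorem eval_append (ρ : A → G) (v w : List A) : eval ρ (v ++ w) = eval ρ v * eval ρ w := by
  simp [eval]

theorem eval_single (ρ : A → G) (a : A) : eval ρ [a] = ρ a := by
  simp [eval]

theorem allE_append (ρ : A → G) (P : G × A → Prop) (g : G) (v w : List A) :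
    AllE ρ P g (v ++ w) ↔ AllE ρ P g v ∧ AllE ρ P (g * eval ρ v) w := by
  induction v generalizing g with
  | nil => simp [AllE, eval_nil]
  | cons a v ih => simp [AllE, eval_cons, ih, mul_assoc, and_assoc]

theorem allE_mono (ρ : A → G) {P Q : G × A → Prop} (h : ∀ e, P e → Q e) (g : G) (w : List A)
    (hw : AllE ρ P g w) : AllE ρ Q g w := by
  induction w generalizing g with
  | nil => trivial
  | cons a v ih => exact ⟨h _ hw.1, ih _ hw.2⟩

theorem allE_iff_edge (ρ : A → G) (P : G × A → Prop) (g : G) (w : List A) :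
    AllE ρ P g w ↔ ∀ e, EdgeOnPath ρ g w e → P e := by
  induction w generalizing g with
  | nil =>
    simp only [AllE, true_iff]
    rintro e ⟨i, _⟩
    exact absurd i.2 (by simp)
  | cons a v ih =>
    simp only [AllE, ih]
    constructor
    · rintro ⟨h1, h2⟩ e ⟨⟨i, hi⟩, rfl⟩
      cases i with
      | zero => simpa [eval_nil] using h1
      | succ i =>
        refine h2 _ ⟨⟨i, by simpa using hi⟩, ?_⟩
        simp [eval_cons, mul_assoc]
    · intro h
      refine ⟨h _ ⟨⟨0, by simp⟩, by simp [eval_nil]⟩, ?_⟩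
      rintro e ⟨⟨i, hi⟩, rfl⟩
      refine h _ ⟨⟨i + 1, by simpa using hi⟩, ?_⟩
      simp [eval_cons, mul_assoc]

theorem allE_iff_prefix (ρ : A → G) (P : G × A → Prop) (g : G) (w : List A) :
    AllE ρ P g w ↔ ∀ (p : List A) (a : A), p ++ [a] <+: w → P (g * eval ρ p, a) := by
  constructor
  · rintro h p a ⟨t, rfl⟩
    rw [allE_append, allE_append] at h
    exact h.1.2.1
  · intro h
    induction w generalizing g with
    | nil => trivial
    | cons b v ih =>
      refine ⟨by simpa [eval_nil] using h [] b ⟨v, by simp⟩, ih _ ?_⟩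
      intro p a hp
      have := h (b :: p) a (by simpa using hp)
      simpa [eval_cons, mul_assoc] using this

section
variable (ρ : A → G) (ι : A → A)

theorem exists_word (hgen : Subgroup.closure (Set.range ρ) = ⊤)
    (hρι : ∀ a : A, ρ (ι a) = (ρ a)⁻¹) (g : G) : ∃ w, eval ρ w = g := by
  have hg : g ∈ Subgroup.closure (Set.range ρ) := by rw [hgen]; trivial
  induction hg using Subgroup.closure_induction with
  | mem x hx => obtain ⟨a, rfl⟩ := hx; exact ⟨[a], eval_single ρ a⟩
  | one => exact ⟨[], rfl⟩
  | mul x y _ _ hx hy =>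
    obtain ⟨v, rfl⟩ := hx
    obtain ⟨w, rfl⟩ := hy
    exact ⟨v ++ w, eval_append ρ v w⟩
  | inv x hx0 hx =>
    clear hx0
    obtain ⟨v, rfl⟩ := hx
    induction v with
    | nil => exact ⟨[], by simp [eval_nil]⟩
    | cons a v ih =>
      obtain ⟨w, hw⟩ := ih
      exact ⟨w ++ [ι a], by simp [eval_append, eval_nil, eval_cons, hw, hρι]⟩

theorem wlen_le (w : List A) : wlen ρ (eval ρ w) ≤ w.length := Nat.sInf_le ⟨w, rfl, rfl⟩

theorem wlen_spec (hw : ∀ g : G, ∃ w, eval ρ w = g) (g : G) :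
    ∃ w, w.length = wlen ρ g ∧ eval ρ w = g := by
  obtain ⟨w, h⟩ := hw g
  exact Nat.sInf_mem (s := {n : ℕ | ∃ w : List A, w.length = n ∧ eval ρ w = g}) ⟨_, w, rfl, h⟩

theorem wlen_one : wlen ρ (1 : G) = 0 := by
  have := wlen_le ρ []
  simpa [eval_nil] using this

theorem wlen_mul (hw : ∀ g : G, ∃ w, eval ρ w = g) (g : G) (a : A) :
    wlen ρ (g * ρ a) ≤ wlen ρ g + 1 := by
  obtain ⟨w, h1, h2⟩ := wlen_spec ρ hw g
  have := wlen_le ρ (w ++ [a])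
  simpa [eval_append, eval_single, h1, h2] using this

theorem wlen_mul' (hw : ∀ g : G, ∃ w, eval ρ w = g)
    (hρι : ∀ a : A, ρ (ι a) = (ρ a)⁻¹) (g : G) (a : A) :
    wlen ρ g ≤ wlen ρ (g * ρ a) + 1 := by
  have := wlen_mul ρ hw (g * ρ a) (ι a)
  simpa [hρι] using this

theorem pathInBall_iff (hw : ∀ g : G, ∃ w, eval ρ w = g)
    (hρι : ∀ a : A, ρ (ι a) = (ρ a)⁻¹) (g : G) (w : List A) (n : ℕ) :
    PathInBall ρ g w n ↔ wlen ρ g ≤ n ∧ AllE ρ (fun e => bet ρ e < 2 * n) g w := by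
  rw [allE_iff_prefix]
  simp only [bet]
  constructor
  · rintro ⟨h1, h2⟩
    refine ⟨by simpa [eval_nil] using h1 [] (List.nil_prefix), ?_⟩
    intro p a hp
    have h3 := h1 _ hp
    have h4 := h1 p ((List.prefix_append p [a]).trans hp)
    have h5 := h2 p a hp
    rw [eval_append, eval_single, ← mul_assoc] at h3 h5
    omega
  · rintro ⟨h1, h2⟩
    constructor
    · intro p hp
      rcases List.eq_nil_or_concat p with rfl | ⟨q, a, rfl⟩
      · simpa [eval_nil] using h1
      · have h3 := h2 q a (by simpa using hp)
        have h4 := wlen_mul ρ hw (g * eval ρ q) a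
        simp only [eval_append, eval_single, List.concat_eq_append, ← mul_assoc] at *
        omega
    · intro p a hp
      have h3 := h2 p a hp
      rw [eval_append, eval_single, ← mul_assoc]
      omega

/-- Reduction of outward excursions along degenerate edges. -/
theorem reduce (hw : ∀ g : G, ∃ w, eval ρ w = g) (C : Set (List A)) (hC : IsNormalFormSet ρ C)
    (hgeo : ∀ w ∈ C, w.length = wlen ρ (eval ρ w)) (hinv : Function.Involutive ι)
    (hρι : ∀ a : A, ρ (ι a) = (ρ a)⁻¹) (n : ℕ) (w : List A) :
    ∀ g : G, wlen ρ (g * eval ρ w) ≤ n →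
      AllE ρ (fun e => IsDegenerate ρ ι C e ∨ bet ρ e < 2 * n) g w →
      ∃ w' : List A, w'.length ≤ w.length ∧ eval ρ w' = eval ρ w ∧
        AllE ρ (fun e => bet ρ e < 2 * n ∨
          (IsDegenerate ρ ι C e ∧ wlen ρ (e.1 * ρ e.2) < wlen ρ e.1)) g w' := by
  induction w with
  | nil => intro g _ _; exact ⟨[], le_rfl, rfl, trivial⟩
  | cons a w ih =>
    intro g hend hall
    obtain ⟨w', hl, he, hw'⟩ := ih (g * ρ a) (by simpa [eval_cons, mul_assoc] using hend) hall.2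
    by_cases hb : bet ρ (g, a) < 2 * n
    · exact ⟨a :: w', by simpa using hl, by simp [eval_cons, he], Or.inl hb, hw'⟩
    have hd : IsDegenerate ρ ι C (g, a) := hall.1.resolve_right hb
    by_cases hdesc : wlen ρ (g * ρ a) < wlen ρ g
    · exact ⟨a :: w', by simpa using hl, by simp [eval_cons, he], Or.inr ⟨hd, hdesc⟩, hw'⟩
    obtain ⟨y₁, y₂, hy1, hy1e, hy2, hy2e, h⟩ := hd
    simp only [bet] at hb hy1e hy2e h
    have l1 := hgeo _ hy1
    have l2 := hgeo _ hy2
    rw [hy1e] at l1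
    rw [hy2e] at l2
    rcases h with h | h
    swap
    · have := congrArg List.length h
      simp at this
      omega
    have hlen := congrArg List.length h
    simp at hlen
    cases w' with
    | nil =>
      rw [eval_cons, ← he, eval_nil, mul_one] at hend
      omega
    | cons b v =>
      obtain ⟨hb1, hb2⟩ := hw'
      rcases hb1 with hb1 | ⟨hb1, hb3⟩
      · simp only [bet] at hb1
        have := wlen_mul' ρ ι hw hρι (g * ρ a) b
        omega
      obtain ⟨z₁, z₂, hz1, hz1e, hz2, hz2e, h'⟩ := hb1
      simp only at hz1e hz2e h' hb3
      have m1 := hgeo _ hz1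
      have m2 := hgeo _ hz2
      rw [hz1e] at m1
      rw [hz2e] at m2
      rcases h' with h' | h'
      · have := congrArg List.length h'
        simp at this
        omega
      have hz : z₁ = y₂ := (hC (g * ρ a)).unique ⟨hz1, hz1e⟩ ⟨hy2, hy2e⟩
      rw [hz, ← h] at h'
      have hab := (List.append_inj' h' rfl).2
      have hab : a = ι b := by simpa using hab
      have hgb : ρ a * ρ b = 1 := by rw [hab, hρι]; simp
      refine ⟨v, ?_, ?_, ?_⟩
      · simp at hl ⊢; omega
      · rw [eval_cons, ← he, eval_cons, ← mul_assoc, hgb, one_mul]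
      · rwa [mul_assoc, hgb, mul_one] at hb2

theorem reduce_final (P : G × A → Prop) (n : ℕ) (w : List A) :
    ∀ g : G, wlen ρ g ≤ n → (∀ g a, wlen ρ (g * ρ a) ≤ wlen ρ g + 1) →
      (∀ g a, wlen ρ g ≤ wlen ρ (g * ρ a) + 1) →
      AllE ρ (fun e => bet ρ e < 2 * n ∨ (P e ∧ wlen ρ (e.1 * ρ e.2) < wlen ρ e.1)) g w →
      AllE ρ (fun e => bet ρ e < 2 * n) g w := by
  induction w with
  | nil => intros; trivial
  | cons a w ih =>
    intro g hg t1 t2 h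
    have h1 := h.1
    have := t1 g a
    have := t2 g a
    simp only [bet] at h1
    have key : bet ρ (g, a) < 2 * n := by
      simp only [bet]
      rcases h1 with h1 | ⟨_, h1⟩ <;> omega
    refine ⟨key, ih _ ?_ t1 t2 h.2⟩
    simp only [bet] at key
    omega

/-- One round of replacing recursive edges by stacking words. -/
theorem replace_round (D : G × A → Prop) (k m : ℕ)
    (hrep : ∀ g a, ¬ D (g, a) → ∃ w : List A, w.length ≤ k ∧ eval ρ w = ρ a ∧
      AllE ρ (fun e' => D e' ∨ bet ρ e' < bet ρ (g, a)) g w) (w : List A) :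
    ∀ g : G, AllE ρ (fun e => D e ∨ bet ρ e < m + 1) g w →
      ∃ w' : List A, w'.length ≤ (k + 1) * w.length ∧ eval ρ w' = eval ρ w ∧
        AllE ρ (fun e => D e ∨ bet ρ e < m) g w' := by
  induction w with
  | nil => intro g _; exact ⟨[], by simp, rfl, trivial⟩
  | cons a w ih =>
    intro g h
    obtain ⟨w', hl, he, hw'⟩ := ih _ h.2
    by_cases hD : D (g, a)
    · refine ⟨a :: w', ?_, by simp [eval_cons, he], Or.inl hD, hw'⟩
      simp only [List.length_cons]
      nlinarith
    · obtain ⟨v, hv, hve, hva⟩ := hrep g a hD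
      refine ⟨v ++ w', ?_, by simp [eval_append, eval_cons, he, hve], ?_⟩
      · simp only [List.length_cons, List.length_append]
        nlinarith
      · rw [allE_append, hve]
        refine ⟨allE_mono ρ ?_ _ _ hva, hw'⟩
        intro e he'
        have := h.1.resolve_left hD
        exact he'.imp id (fun h => by omega)

theorem edgeDist_lt_iff (e e' : G × A) : edgeDist ρ e' < edgeDist ρ e ↔ bet ρ e' < bet ρ e := by
  unfold edgeDist bet
  rw [div_lt_div_iff_of_pos_right (by norm_num)]
  norm_cast

theorem ac_of_gs (hw : ∀ g : G, ∃ w, eval ρ w = g) (hinv : Function.Involutive ι)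
    (hρι : ∀ a : A, ρ (ι a) = (ρ a)⁻¹) (h : IsGeodesicallyStackable ρ ι) :
    IsAlmostConvex ρ := by
  obtain ⟨C, lt, k, Φ, ⟨_, hC, hlt, _, _, _⟩, hΦ, hgeo, hflow⟩ := h
  have hrep : ∀ g a, ¬ IsDegenerate ρ ι C (g, a) → ∃ w : List A, w.length ≤ k ∧
      eval ρ w = ρ a ∧
      AllE ρ (fun e' => IsDegenerate ρ ι C e' ∨ bet ρ e' < bet ρ (g, a)) g w := by
    intro g a hr
    obtain ⟨h1, h2, h3⟩ := hΦ (g, a) hr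
    refine ⟨Φ (g, a), h2, h1, ?_⟩
    rw [allE_iff_edge]
    intro e' he'
    by_cases hd : IsDegenerate ρ ι C e'
    · exact Or.inl hd
    · exact Or.inr ((edgeDist_lt_iff ρ _ _).1 (hflow e' _ (.single ⟨hr, hd, he'⟩)))
  refine ⟨(k + 1) * ((k + 1) * 2), ?_⟩
  intro n g h hg hh hgh
  obtain ⟨w, hl, he⟩ := wlen_spec ρ hw (g⁻¹ * h)
  have hend : g * eval ρ w = h := by rw [he]; group
  have t1 := wlen_mul ρ hw
  have t2 := wlen_mul' ρ ι hw hρι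
  have h0 : AllE ρ (fun e => IsDegenerate ρ ι C e ∨ bet ρ e < 2 * n + 1 + 1) g w := by
    match w, hl, hend with
    | [], _, _ => trivial
    | [a], _, hend =>
      rw [eval_single] at hend
      refine ⟨Or.inr ?_, trivial⟩
      simp only [bet, hend]; omega
    | [a, b], _, hend =>
      rw [eval_cons, eval_single, ← mul_assoc] at hend
      have := t1 g a
      refine ⟨Or.inr ?_, Or.inr ?_, trivial⟩
      · simp only [bet]; omega
      · simp only [bet, hend]; omega
    | a :: b :: c :: w, hl, _ => simp at hl; omega
  obtain ⟨w1, hl1, he1, h1⟩ := replace_round ρ _ k _ hrep w g h0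
  obtain ⟨w2, hl2, he2, h2⟩ := replace_round ρ _ k _ hrep w1 g h1
  obtain ⟨w3, hl3, he3, h3⟩ := reduce ρ ι hw C hC hgeo hinv hρι n w2 g
    (by rw [he2, he1, hend, hh]) h2
  refine ⟨w3, ?_, by rw [he3, he2, he1, he], ?_⟩
  · refine hl3.trans (hl2.trans (Nat.mul_le_mul_left _ (hl1.trans (Nat.mul_le_mul_left _ ?_))))
    omega
  · rw [pathInBall_iff ρ ι hw hρι]
    exact ⟨hg.le, reduce_final ρ _ n w3 g hg.le t1 t2 h3⟩

theorem exists_nf (hw : ∀ g : G, ∃ w, eval ρ w = g) :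
    ∃ y : G → List A, ∀ g, eval ρ (y g) = g ∧ (y g).length = wlen ρ g ∧
      (wlen ρ g ≠ 0 → ∃ h a, y g = y h ++ [a]) := by
  have hc : ∀ g : G, ∃ l : List A, wlen ρ g ≠ 0 → ∃ a, l = [a] ∧
      wlen ρ (g * (ρ a)⁻¹) + 1 = wlen ρ g := by
    intro g
    obtain ⟨w, h1, h2⟩ := wlen_spec ρ hw g
    rcases List.eq_nil_or_concat w with rfl | ⟨v, a, rfl⟩
    · exact ⟨[], fun h => absurd h1.symm h⟩
    · refine ⟨[a], fun _ => ⟨a, rfl, ?_⟩⟩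
      simp only [List.concat_eq_append, eval_append, eval_single, List.length_append,
        List.length_singleton] at h1 h2
      have h3 : g * (ρ a)⁻¹ = eval ρ v := by rw [← h2]; group
      have h4 := wlen_le ρ v
      have h5 := wlen_mul ρ hw (eval ρ v) a
      rw [h2] at h5
      rw [h3]; omega
  choose c hc using hc
  let nf : ℕ → G → List A := fun n => Nat.rec (fun _ => [])
    (fun _ f g => f (g * (eval ρ (c g))⁻¹) ++ c g) n
  have nfs : ∀ n g, nf (n + 1) g = nf n (g * (eval ρ (c g))⁻¹) ++ c g := fun _ _ => rfl
  have main : ∀ n g, wlen ρ g = n → eval ρ (nf n g) = g ∧ (nf n g).length = n := by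
    intro n
    induction n with
    | zero =>
      intro g hg
      obtain ⟨w, h1, h2⟩ := wlen_spec ρ hw g
      rw [hg, List.length_eq_zero_iff] at h1
      subst h1
      exact ⟨h2, rfl⟩
    | succ n ih =>
      intro g hg
      obtain ⟨a, ha, hl⟩ := hc g (by omega)
      obtain ⟨i1, i2⟩ := ih (g * (ρ a)⁻¹) (by omega)
      rw [nfs, ha, eval_single]
      simp [eval_append, eval_single, i1, i2]
  refine ⟨fun g => nf (wlen ρ g) g, fun g => ⟨(main _ g rfl).1, (main _ g rfl).2, ?_⟩⟩
  intro hg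
  obtain ⟨a, ha, hl⟩ := hc g hg
  refine ⟨g * (ρ a)⁻¹, a, ?_⟩
  simp only
  rw [← hl, nfs, ha, eval_single]

theorem gs_of_ac (hw : ∀ g : G, ∃ w, eval ρ w = g) (hinv : Function.Involutive ι)
    (hρι : ∀ a : A, ρ (ι a) = (ρ a)⁻¹) (h : IsAlmostConvex ρ) :
    IsGeodesicallyStackable ρ ι := by
  obtain ⟨k, hk⟩ := h
  obtain ⟨y, hy⟩ := exists_nf ρ hw
  have t1 := wlen_mul ρ hw
  have t2 := wlen_mul' ρ ι hw hρι
  set C : Set (List A) := Set.range y with hCdef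
  have hyC : ∀ g, y g ∈ C := fun g => ⟨g, rfl⟩
  have hk' : ∀ (n : ℕ) (g h : G), wlen ρ g = n → wlen ρ h = n →
      wlen ρ (g⁻¹ * h) ≤ 2 → ∃ w : List A, w.length ≤ k ∧ eval ρ w = g⁻¹ * h ∧
        AllE ρ (fun e => bet ρ e < 2 * n) g w := by
    intro n g h h1 h2 h3
    obtain ⟨w, a1, a2, a3⟩ := hk n g h h1 h2 h3
    exact ⟨w, a1, a2, ((pathInBall_iff ρ ι hw hρι g w n).1 a3).2⟩
  have hC : IsNormalFormSet ρ C := by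
    intro g
    refine ⟨y g, ⟨hyC g, (hy g).1⟩, ?_⟩
    rintro w ⟨⟨g', rfl⟩, h⟩
    rw [(hy g').1] at h
    rw [h]
  -- predecessor
  have hpred : ∀ g, wlen ρ g ≠ 0 → ∃ h b, h * ρ b = g ∧ wlen ρ h + 1 = wlen ρ g ∧
      IsDegenerate ρ ι C (h, b) ∧ IsDegenerate ρ ι C (g, ι b) := by
    intro g hg
    obtain ⟨h, b, hb⟩ := (hy g).2.2 hg
    have e1 : h * ρ b = g := by
      rw [← (hy g).1, hb, eval_append, eval_single, (hy h).1]
    refine ⟨h, b, e1, ?_, ?_, ?_⟩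
    · rw [← (hy g).2.1, hb, ← (hy h).2.1]; simp
    · exact ⟨y h, y g, hyC h, (hy h).1, hyC g, by rw [(hy g).1, e1], Or.inl hb.symm⟩
    · refine ⟨y g, y h, hyC g, (hy g).1, hyC h, ?_, Or.inr (by rw [hinv b, hb])⟩
      rw [(hy h).1, hρι, ← e1]; simp
  have hrep : ∀ e : G × A, ∃ w : List A, w.length ≤ k + 1 ∧ eval ρ w = ρ e.2 ∧
      ∀ e', EdgeOnPath ρ e.1 w e' → IsDegenerate ρ ι C e' ∨
        (IsRecursive ρ ι C e' ∧ IsRecursive ρ ι C e ∧ bet ρ e' < bet ρ e) := by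
    rintro ⟨g, a⟩
    by_cases hd : IsDegenerate ρ ι C (g, a)
    · refine ⟨[a], by simp, eval_single ρ a, ?_⟩
      rw [← allE_iff_edge ρ (fun e' => IsDegenerate ρ ι C e' ∨
        (IsRecursive ρ ι C e' ∧ IsRecursive ρ ι C (g, a) ∧ bet ρ e' < bet ρ (g, a)))]
      exact ⟨Or.inl hd, trivial⟩
    suffices hs : ∃ w : List A, w.length ≤ k + 1 ∧ eval ρ w = ρ a ∧
        AllE ρ (fun e' => IsDegenerate ρ ι C e' ∨ bet ρ e' < bet ρ (g, a)) g w by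
      obtain ⟨w, h1, h2, h3⟩ := hs
      refine ⟨w, h1, h2, fun e' he' => ?_⟩
      by_cases hd' : IsDegenerate ρ ι C e'
      · exact Or.inl hd'
      · exact Or.inr ⟨hd', hd, ((allE_iff_edge ρ _ _ _).1 h3 e' he').resolve_left hd'⟩
    have s1 := t1 g a
    have s2 := t2 g a
    have two : ∀ b c : A, wlen ρ (ρ b * ρ c) ≤ 2 := by
      intro b c
      have := wlen_le ρ [b, c]
      simpa [eval_cons, eval_nil] using this
    have hbet : bet ρ (g, a) = wlen ρ g + wlen ρ (g * ρ a) := rfl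
    rcases lt_trichotomy (wlen ρ g) (wlen ρ (g * ρ a)) with hlt | heq | hgt
    · obtain ⟨h, b, e1, l1, d1, d2⟩ := hpred (g * ρ a) (by omega)
      have e2 : g⁻¹ * h = ρ a * ρ (ι b) := by
        rw [hρι, eq_mul_inv_iff_mul_eq, mul_assoc, e1]; group
      obtain ⟨w, w1, w2, w3⟩ := hk' (wlen ρ g) g h rfl (by omega) (by rw [e2]; exact two _ _)
      refine ⟨w ++ [b], by simpa using w1, ?_, ?_⟩
      · rw [eval_append, eval_single, w2, e2, hρι]; simp
      · rw [allE_append, w2]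
        refine ⟨allE_mono ρ (fun e he => Or.inr ?_) _ _ w3, Or.inl ?_, trivial⟩
        · omega
        · simpa using d1
    · obtain ⟨w, w1, w2, w3⟩ := hk' (wlen ρ g) g (g * ρ a) rfl heq.symm (by
        have := wlen_le ρ [a]
        rw [eval_single] at this
        simp at this ⊢
        omega)
      refine ⟨w, by omega, by rw [w2]; simp, allE_mono ρ (fun e he => Or.inr ?_) _ _ w3⟩
      omega
    · obtain ⟨h, b, e1, l1, d1, d2⟩ := hpred g (by omega)
      have e2 : h⁻¹ * (g * ρ a) = ρ b * ρ a := by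
        rw [← e1]; group
      obtain ⟨w, w1, w2, w3⟩ := hk' (wlen ρ h) h (g * ρ a) rfl (by omega)
        (by rw [e2]; exact two _ _)
      refine ⟨ι b :: w, by simpa using w1, ?_, Or.inl d2, ?_⟩
      · rw [eval_cons, w2, e2, hρι]; simp
      · have e3 : g * ρ (ι b) = h := by rw [← e1, hρι]; simp
        rw [e3]
        refine allE_mono ρ (fun e he => Or.inr ?_) _ _ w3
        omega
  choose Φ hΦ1 hΦ2 hΦ3 using hrep
  refine ⟨C, fun e' e => IsRecursive ρ ι C e' ∧ IsRecursive ρ ι C e ∧ bet ρ e' < bet ρ e,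
    k + 1, Φ, ⟨?_, hC, fun e e' h => ⟨h.1, h.2.1⟩, ?_, ?_, ?_⟩, ?_, ?_, ?_⟩
  · have h := (hy 1).2.1
    rw [wlen_one, List.length_eq_zero_iff] at h
    rw [← h]; exact hyC 1
  · intro e1 e2 e3 h1 h2
    exact ⟨h1.1, h2.2.1, h1.2.2.trans h2.2.2⟩
  · exact Subrelation.wf (fun h => h.2.2) (InvImage.wf (bet ρ) Nat.lt_wfRel.wf)
  · intro g a
    exact ⟨Φ (g, a), hΦ1 _, hΦ2 _, hΦ3 (g, a)⟩
  · intro e _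
    exact ⟨hΦ2 e, hΦ1 e, hΦ3 e⟩
  · rintro w ⟨g, rfl⟩
    rw [(hy g).1, (hy g).2.1]
  · intro e' e h
    rw [edgeDist_lt_iff]
    have step : ∀ e' e, FlowPrec ρ ι C Φ e' e → bet ρ e' < bet ρ e := by
      rintro e' e ⟨h1, h2, h3⟩
      exact ((hΦ3 e e' h3).resolve_left h2).2.2
    induction h with
    | single h => exact step _ _ h
    | tail _ h ih => exact ih.trans (step _ _ h)

end

/-- `(G, A)` is almost convex iff `(G, A)` is geodesically stackable. -/
theorem isAlmostConvex_iff_isGeodesicallyStackable {G : Type*} [Group G] {A : Type*}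
    [Fintype A]
    (ρ : A → G) (ι : A → A)
    (hgen : Subgroup.closure (Set.range ρ) = ⊤)
    (hne : ∀ a : A, ρ a ≠ 1)
    (hinv : Function.Involutive ι)
    (hρι : ∀ a : A, ρ (ι a) = (ρ a)⁻¹) :
    IsAlmostConvex ρ ↔ IsGeodesicallyStackable ρ ι := by
  have hw := exists_word ρ ι hgen hρι
  exact ⟨gs_of_ac ρ ι hw hinv hρι, ac_of_gs ρ ι hw hinv hρι⟩

end Stk
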